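/- Let w' ≥ 1, j ≥ 1, and t ≥ 0. Let λ' and μ' be partitions of w' such that all parts of λ' are divisible by p^t. Set w = w'·p^j, λ = p^j·λ', and μ = p^j*μ'. Then for every n ≥ w one has d_{λμ} ≡ d_{λ'μ'} (mod p^{t+1}). -/

import Mathlib

/-!
Writing `d_{λμ}` for the coefficient of `e_λ` in `m_μ`, the matrix `d` is symmetric
(`coeff_symm`): this follows from the dual Cauchy identity
`∏ (1 + x_i y_k) = ∑ m_μ(x) e_μ(y)` (`cauchyKernel_eq`), whose left-hand side is symmetric in `x`
and `y`. So `d_{λμ}` is also the coefficient of `e_μ` in `m_λ`.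

On symmetric polynomials, viewed as `ℤ[e_1, …, e_n]`, the substitution `φ : f(x) ↦ f(x^p)` is a
ring endomorphism lifting the Frobenius modulo `p` (`exists_frobenius_lift`), and it sends `m_κ` to
`m_{p·κ}`. Another Frobenius lift is `σ : e_i ↦ e_i^p`. For any two Frobenius lifts,
`φ^(s+1) ≡ σ ∘ φ^s` modulo `p^(s+1)` (`frobenius_lift_iterate`). Since `σ` moves the coefficient
of `e_μ` to `e_{p*μ}`, the coefficient of `e_{p^j*μ'}` in `φ^(t+j) f` is congruent modulo `p^(t+1)`
to that of `e_{μ'}` in `φ^t f` (`coeff_iterate_modEq`). Writing `λ' = p^t·κ` and taking `f = m_κ`,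
these two coefficients are the transposed `d_{λμ}` and `d_{λ'μ'}`.
-/

open scoped Classical

/-- The monomial symmetric polynomial in `n` variables associated to the partition
(multiset of positive integers) `μ`: the sum of all distinct monomials whose multiset of
nonzero exponents equals `μ`. -/
noncomputable def msymmM (n : ℕ) (R : Type) [CommSemiring R] (μ : Multiset ℕ) :
    MvPolynomial (Fin n) R :=
  ∑ d : Fin n → Fin (μ.sum + 1),
    if (Multiset.map (fun i => (d i : ℕ)) Finset.univ.val).filter (· ≠ 0) = μ then
      MvPolynomial.monomial (Finsupp.equivFunOnFinite.symm fun i => (d i : ℕ)) (1 : R)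
    else 0

/-- The exponent vector of the monomial `X_{λ₁}⋯X_{λₖ}` associated to a partition
`lam = {λ₁,…,λₖ}` with parts ≤ n; the variable `X_m` corresponds to the index `m - 1`. -/
noncomputable def expOf (n : ℕ) (lam : Multiset ℕ) : Fin n →₀ ℕ :=
  Finsupp.equivFunOnFinite.symm fun i : Fin n => lam.count ((i : ℕ) + 1)

section

open MvPolynomial TensorProduct

/-! ### Elementary and monomial symmetric polynomials -/

/-- The multiset of nonzero exponents of the monomial `X^d`. -/
noncomputable def shape {n : ℕ} (d : Fin n →₀ ℕ) : Multiset ℕ :=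
  (Multiset.map (fun i => d i) Finset.univ.val).filter (· ≠ 0)

/-- The substitution `X_i ↦ e_{i+1}`, as an endomorphism of the polynomial ring in `n` variables. It
is `MvPolynomial.esymmAlgHom` without the restriction of the codomain to symmetric polynomials. -/
noncomputable def esymmHom (n : ℕ) (R : Type) [CommRing R] :
    MvPolynomial (Fin n) R →ₐ[R] MvPolynomial (Fin n) R :=
  aeval (fun i : Fin n => esymm (Fin n) R ((i : ℕ) + 1))

theorem esymmHom_eq (n : ℕ) (R : Type) [CommRing R] (f : MvPolynomial (Fin n) R) :
    esymmHom n R f = (esymmAlgHom (Fin n) R n f : MvPolynomial (Fin n) R) := by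
  rw [esymmAlgHom_apply]; rfl

theorem esymmHom_injective (n : ℕ) (R : Type) [CommRing R] :
    Function.Injective (esymmHom n R) := by
  intro f g h
  rw [esymmHom_eq, esymmHom_eq] at h
  exact esymmAlgHom_fin_injective R le_rfl (Subtype.ext h)

theorem exists_esymmHom_eq {n : ℕ} {R : Type} [CommRing R] {f : MvPolynomial (Fin n) R}
    (hf : f.IsSymmetric) : ∃ g, esymmHom n R g = f := by
  obtain ⟨g, hg⟩ := esymmAlgHom_fin_surjective R (le_refl n) ⟨f, hf⟩
  exact ⟨g, by rw [esymmHom_eq, hg]⟩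

theorem map_esymmHom {n : ℕ} {R S : Type} [CommRing R] [CommRing S] (φ : R →+* S)
    (f : MvPolynomial (Fin n) R) :
    map φ (esymmHom n R f) = esymmHom n S (map φ f) := by
  induction f using MvPolynomial.induction_on with
  | C a => simp [esymmHom]
  | add f g hf hg => simp only [map_add, hf, hg]
  | mul_X f i hf => simp only [map_mul, hf, map_X]; simp [esymmHom, map_esymm]

/-- The exponents in the sum defining `msymmM` may be cut off at any bound `N` for the parts of `μ`. -/
theorem coeff_sum_shape {n N : ℕ} (μ : Multiset ℕ) (hμ : ∀ i ∈ μ, i ≤ N) (d : Fin n →₀ ℕ) :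
    coeff d (∑ a : Fin n → Fin (N + 1),
      if shape (Finsupp.equivFunOnFinite.symm fun i => (a i : ℕ)) = μ then
        monomial (Finsupp.equivFunOnFinite.symm fun i => (a i : ℕ)) (1 : ℤ) else 0) =
      if shape d = μ then 1 else 0 := by
  have hle : shape d = μ → ∀ i, d i ≤ N := by
    rintro rfl i
    by_cases h : d i = 0
    · omega
    · exact hμ _ (by simp [shape, h])
  rw [coeff_sum]
  split_ifs with h
  · rw [Finset.sum_eq_single (fun i => ⟨d i, Nat.lt_succ_of_le (hle h i)⟩)]
    · have : (Finsupp.equivFunOnFinite.symm fun i => d i) = d := by ext; simp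
      simp [this, h]
    · intro b _ hb
      split_ifs
      · rw [coeff_monomial, if_neg]
        rintro rfl
        exact hb (by ext; simp)
      · simp
    · simp
  · refine Finset.sum_eq_zero fun b _ => ?_
    split_ifs with h'
    · rw [coeff_monomial, if_neg]
      rintro rfl
      exact h h'
    · simp

theorem coeff_msymmM {n : ℕ} (μ : Multiset ℕ) (d : Fin n →₀ ℕ) :
    coeff d (msymmM n ℤ μ) = if shape d = μ then 1 else 0 := by
  rw [← coeff_sum_shape μ (fun i hi => Multiset.le_sum_of_mem hi) d, msymmM]
  rfl

theorem msymmM_eq_sum {n N : ℕ} (μ : Multiset ℕ) (hμ : ∀ i ∈ μ, i ≤ N) :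
    msymmM n ℤ μ = ∑ a : Fin n → Fin (N + 1),
      if shape (Finsupp.equivFunOnFinite.symm fun i => (a i : ℕ)) = μ then
        monomial (Finsupp.equivFunOnFinite.symm fun i => (a i : ℕ)) (1 : ℤ) else 0 := by
  ext d
  rw [coeff_msymmM, coeff_sum_shape μ hμ]

theorem shape_mapDomain {n : ℕ} (e : Equiv.Perm (Fin n)) (d : Fin n →₀ ℕ) :
    shape (d.mapDomain e) = shape d := by
  unfold shape
  congr 1
  have h : (fun i => d.mapDomain e i) = (fun i => d i) ∘ e.symm := by
    ext i
    conv_lhs => rw [← e.apply_symm_apply i]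
    rw [Finsupp.mapDomain_apply e.injective]; rfl
  rw [h, ← Multiset.map_map]
  congr 1
  exact Multiset.map_univ_val_equiv e.symm

theorem msymmM_isSymmetric (n : ℕ) (μ : Multiset ℕ) : (msymmM n ℤ μ).IsSymmetric := by
  intro e
  ext d
  have hd : d = (d.mapDomain e.symm).mapDomain e := by
    rw [← Finsupp.mapDomain_comp]; simp
  rw [hd, coeff_rename_mapDomain _ e.injective, coeff_msymmM, coeff_msymmM,
    shape_mapDomain e]

theorem shape_smul {n q : ℕ} (hq : q ≠ 0) (d : Fin n →₀ ℕ) :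
    shape (q • d) = (shape d).map (q * ·) := by
  simp only [shape, Multiset.filter_map, Multiset.map_map, Finsupp.smul_apply, smul_eq_mul]
  congr 1
  apply Multiset.filter_congr
  simp [hq]

theorem expand_msymmM {n q : ℕ} (hq : q ≠ 0) (μ : Multiset ℕ) :
    expand q (msymmM n ℤ μ) = msymmM n ℤ (μ.map (q * ·)) := by
  ext d
  by_cases h : ∀ i, q ∣ d i
  · choose c hc using h
    have : d = q • Finsupp.equivFunOnFinite.symm c := by ext i; simp [hc]
    rw [this, coeff_expand_smul _ hq, coeff_msymmM, coeff_msymmM, shape_smul hq]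
    have hinj : Function.Injective (q * · : ℕ → ℕ) := fun a b h => by simpa [hq] using h
    simp only [(Multiset.map_injective hinj).eq_iff]
  · push Not at h
    obtain ⟨i, hi⟩ := h
    rw [coeff_expand_of_not_dvd _ hi, coeff_msymmM, if_neg]
    intro h
    have : d i ∈ shape d := by
      simp only [shape, Multiset.mem_filter, Multiset.mem_map]
      exact ⟨⟨i, by simp⟩, fun h0 => hi (by simp [h0])⟩
    rw [h] at this
    obtain ⟨a, -, ha⟩ := Multiset.mem_map.1 this
    exact hi ⟨a, ha.symm⟩

/-! ### Comparing two Frobenius lifts -/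

theorem dvd_pow_sub_pow {A : Type*} [CommRing A] {p s : ℕ} {a b : A}
    (h : (p : A) ^ (s + 1) ∣ a - b) : (p : A) ^ (s + 2) ∣ a ^ p - b ^ p := by
  obtain ⟨c, hc⟩ := h
  have hab : (p : A) ∣ a - b := ⟨p ^ s * c, by rw [hc]; ring⟩
  rw [← (Commute.all a b).mul_geom_sum₂, pow_succ]
  refine mul_dvd_mul ⟨c, hc⟩ ?_
  have h2 : (Ideal.Quotient.mk (Ideal.span {(p : A)})) a = Ideal.Quotient.mk _ b := by
    rw [Ideal.Quotient.mk_eq_mk_iff_sub_mem, Ideal.mem_span_singleton]; exact hab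
  rw [← Ideal.mem_span_singleton, ← Ideal.Quotient.eq_zero_iff_mem, RingHom.map_geom_sum₂, h2,
    geom_sum₂_self, ← map_natCast (Ideal.Quotient.mk (Ideal.span {(p : A)})) p]
  rw [Ideal.Quotient.eq_zero_iff_mem.2 (Ideal.mem_span_singleton_self _), zero_mul]

/-- If `φ` and `σ` both lift the Frobenius of `A / p`, then `φ^(s+1) ≡ σ ∘ φ^s` modulo `p^(s+1)`.
The induction writes `φ f = f^p + p g` and applies the previous congruence to `f` and to `g`;
the `p`-th power improves the congruence for `f` by one power of `p`, the factor `p` that for `g`. -/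
theorem frobenius_lift_iterate {A : Type*} [CommRing A] {p : ℕ} (φ σ : A →+* A)
    (hφ : ∀ f, (p : A) ∣ φ f - f ^ p) (hσ : ∀ f, (p : A) ∣ σ f - f ^ p) (s : ℕ) (f : A) :
    (p : A) ^ (s + 1) ∣ φ^[s + 1] f - σ (φ^[s] f) := by
  induction s generalizing f with
  | zero =>
    have := dvd_sub (hφ f) (hσ f)
    simpa using this
  | succ s ih =>
    obtain ⟨g, hg⟩ := hφ f
    have hf : φ f = f ^ p + p * g := by rw [← hg]; ring
    have h1 : φ^[s + 1 + 1] f = (φ^[s + 1] f) ^ p + p * φ^[s + 1] g := by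
      rw [Function.iterate_succ_apply, hf]
      simp only [← RingHom.coe_pow, map_add, map_mul, map_pow, map_natCast]
    have h2 : σ (φ^[s + 1] f) = (σ (φ^[s] f)) ^ p + p * σ (φ^[s] g) := by
      rw [Function.iterate_succ_apply, hf]
      simp only [← RingHom.coe_pow, map_add, map_mul, map_pow, map_natCast]
    rw [h1, h2, add_sub_add_comm, ← mul_sub]
    refine dvd_add (dvd_pow_sub_pow (ih f)) ?_
    rw [pow_succ' _ (s + 1)]
    exact mul_dvd_mul_left _ (ih g)

/-! ### Symmetry of the transition matrix -/

theorem pos_of_mem_shape {n : ℕ} {d : Fin n →₀ ℕ} {i : ℕ} (hi : i ∈ shape d) : 0 < i :=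
  Nat.pos_of_ne_zero (Multiset.mem_filter.1 hi).2

theorem exists_shape_eq {n : ℕ} {μ : Multiset ℕ} (hpos : ∀ i ∈ μ, 0 < i)
    (hcard : Multiset.card μ ≤ n) : ∃ d : Fin n →₀ ℕ, shape d = μ := by
  obtain ⟨l, hl, hlen⟩ : ∃ l : List ℕ, (l : Multiset ℕ).filter (· ≠ 0) = μ ∧ l.length = n := by
    refine ⟨μ.toList ++ List.replicate (n - Multiset.card μ) 0, ?_, by simp [hcard]⟩
    rw [← Multiset.coe_add, Multiset.coe_toList, Multiset.filter_add,
      Multiset.filter_eq_self.2 fun i hi => (hpos i hi).ne']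
    simp
  subst hlen
  refine ⟨Finsupp.equivFunOnFinite.symm l.get, ?_⟩
  rw [shape, ← hl]
  simp only [Finsupp.equivFunOnFinite_symm_apply_apply, Fin.univ_val_map, List.ofFn_get]

theorem expOf_injOn {n : ℕ} {μ ν : Multiset ℕ} (hμ : ∀ i ∈ μ, 0 < i ∧ i ≤ n)
    (hν : ∀ i ∈ ν, 0 < i ∧ i ≤ n) (h : expOf n μ = expOf n ν) : μ = ν := by
  ext k
  by_cases hk : 0 < k ∧ k ≤ n
  · have := DFunLike.congr_fun h ⟨k - 1, by omega⟩
    simpa [expOf, Nat.sub_add_cancel hk.1] using this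
  · rw [Multiset.count_eq_zero_of_notMem fun h => hk (hμ k h),
      Multiset.count_eq_zero_of_notMem fun h => hk (hν k h)]

/-- The dual Cauchy kernel `∏ (1 + x_i y_k)`, with the polynomials in `x` and in `y` as the two
tensor factors. -/
noncomputable def cauchyKernel (n : ℕ) : MvPolynomial (Fin n) ℤ ⊗[ℤ] MvPolynomial (Fin n) ℤ :=
  ∏ i : Fin n, ∏ k : Fin n, (1 + X i ⊗ₜ[ℤ] X k)

theorem comm_cauchyKernel (n : ℕ) :
    TensorProduct.comm ℤ _ _ (cauchyKernel n) = cauchyKernel n := by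
  change Algebra.TensorProduct.comm ℤ _ _ (cauchyKernel n) = cauchyKernel n
  rw [cauchyKernel]
  simp only [map_prod, map_add, map_one, Algebra.TensorProduct.comm_tmul]
  exact Finset.prod_comm

theorem prod_tmul_prod {A B ι : Type*} [CommRing A] [CommRing B] (s : Finset ι)
    (f : ι → A) (g : ι → B) :
    ∏ i ∈ s, (f i ⊗ₜ[ℤ] g i) = (∏ i ∈ s, f i) ⊗ₜ[ℤ] (∏ i ∈ s, g i) := by
  induction s using Finset.induction_on with
  | empty => simp [Algebra.TensorProduct.one_def]
  | insert a s ha ih => simp [Finset.prod_insert ha, ih]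

theorem prod_one_add_tmul {n : ℕ} (i : Fin n) :
    ∏ k : Fin n, (1 + (X i : MvPolynomial (Fin n) ℤ) ⊗ₜ[ℤ] (X k : MvPolynomial (Fin n) ℤ)) =
      ∑ m : Fin (n + 1), (X i ^ (m : ℕ)) ⊗ₜ[ℤ] esymm (Fin n) ℤ m := by
  rw [Finset.prod_one_add, Finset.sum_powerset,
    Fin.sum_univ_eq_sum_range (fun m => (X i ^ m : MvPolynomial (Fin n) ℤ) ⊗ₜ[ℤ] esymm (Fin n) ℤ m),
    Finset.card_univ, Fintype.card_fin]
  refine Finset.sum_congr rfl fun m _ => ?_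
  rw [esymm, tmul_sum]
  refine Finset.sum_congr rfl fun s hs => ?_
  rw [prod_tmul_prod, Finset.prod_const, (Finset.mem_powersetCard.1 hs).2]

/-- Both sides are `e_ν` for `ν` the multiset of nonzero `a i`; the zeros contribute `e_0 = 1`. -/
theorem esymmHom_monomial_shape {n : ℕ} (a : Fin n → Fin (n + 1)) :
    esymmHom n ℤ (monomial
      (expOf n (shape (Finsupp.equivFunOnFinite.symm fun i => (a i : ℕ)))) 1) =
      ∏ i, esymm (Fin n) ℤ (a i) := by
  have h : ∏ i, esymm (Fin n) ℤ (a i) =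
      ∏ b : Fin (n + 1), esymm (Fin n) ℤ b ^ (Finset.univ.filter fun i => a i = b).card := by
    rw [← Finset.prod_fiberwise' Finset.univ a (fun b : Fin (n + 1) => esymm (Fin n) ℤ (b : ℕ))]
    simp
  rw [h, Fin.prod_univ_succ, esymmHom, aeval_monomial, Finsupp.prod_fintype _ _ (by simp)]
  simp only [map_one, one_mul, Fin.val_zero, esymm_zero, one_pow, Fin.val_succ]
  refine Finset.prod_congr rfl fun k _ => ?_
  congr 1
  simp only [expOf, shape, Finsupp.equivFunOnFinite_symm_apply_apply]
  rw [Multiset.count_filter_of_pos (by simp), Multiset.count_map, ← Finset.filter_val,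
    Finset.card_val]
  congr 1
  ext i
  simp [Fin.ext_iff, eq_comm]

/-- The partitions with at most `n` parts, all at most `n` (see `mem_boxPartitions`). -/
noncomputable def boxPartitions (n : ℕ) : Finset (Multiset ℕ) :=
  Finset.univ.image fun a : Fin n → Fin (n + 1) =>
    shape (Finsupp.equivFunOnFinite.symm fun i => (a i : ℕ))

theorem mem_boxPartitions {n : ℕ} {μ : Multiset ℕ} :
    μ ∈ boxPartitions n ↔ (∀ i ∈ μ, 0 < i ∧ i ≤ n) ∧ Multiset.card μ ≤ n := by
  simp only [boxPartitions, Finset.mem_image, Finset.mem_univ, true_and]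
  constructor
  · rintro ⟨a, rfl⟩
    refine ⟨fun i hi => ⟨pos_of_mem_shape hi, ?_⟩, ?_⟩
    · obtain ⟨k, -, rfl⟩ := Multiset.mem_map.1 (Multiset.mem_filter.1 hi).1
      exact Nat.lt_succ_iff.1 (a k).2
    · refine (Multiset.card_le_card (Multiset.filter_le _ _)).trans ?_
      simp
  · rintro ⟨h, hc⟩
    obtain ⟨d, rfl⟩ := exists_shape_eq (fun i hi => (h i hi).1) hc
    refine ⟨fun i => ⟨d i, ?_⟩, ?_⟩
    · by_cases h0 : d i = 0
      · omega
      · exact Nat.lt_succ_of_le (h (d i) (by simp [shape, h0])).2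
    · congr 1
      ext; simp

/-- The dual Cauchy identity `∏ (1 + x_i y_k) = ∑ m_μ(x) e_μ(y)`, over `μ` in the `n × n` box. -/
theorem cauchyKernel_eq (n : ℕ) :
    cauchyKernel n = ∑ μ ∈ boxPartitions n,
      msymmM n ℤ μ ⊗ₜ[ℤ] esymmHom n ℤ (monomial (expOf n μ) 1) := by
  have h1 : cauchyKernel n = ∑ a : Fin n → Fin (n + 1),
      (monomial (Finsupp.equivFunOnFinite.symm fun i => (a i : ℕ)) (1 : ℤ)) ⊗ₜ[ℤ]
        esymmHom n ℤ (monomial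
          (expOf n (shape (Finsupp.equivFunOnFinite.symm fun i => (a i : ℕ)))) 1) := by
    rw [cauchyKernel]
    simp_rw [prod_one_add_tmul]
    rw [Finset.prod_univ_sum, Fintype.piFinset_univ]
    refine Finset.sum_congr rfl fun a _ => ?_
    rw [prod_tmul_prod, esymmHom_monomial_shape, monomial_eq, Finsupp.prod_fintype _ _ (by simp)]
    simp
  rw [h1]
  have h2 : ∀ μ ∈ boxPartitions n,
      msymmM n ℤ μ ⊗ₜ[ℤ] esymmHom n ℤ (monomial (expOf n μ) 1) =
      ∑ a : Fin n → Fin (n + 1),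
        if shape (Finsupp.equivFunOnFinite.symm fun i => (a i : ℕ)) = μ then
        (monomial (Finsupp.equivFunOnFinite.symm fun i => (a i : ℕ)) (1 : ℤ)) ⊗ₜ[ℤ]
        esymmHom n ℤ (monomial
          (expOf n (shape (Finsupp.equivFunOnFinite.symm fun i => (a i : ℕ)))) 1) else 0 := by
    intro μ hμ
    rw [msymmM_eq_sum μ fun i hi => ((mem_boxPartitions.1 hμ).1 i hi).2, sum_tmul]
    refine Finset.sum_congr rfl fun a _ => ?_
    split_ifs with h
    · rw [h]
    · rw [zero_tmul]
  rw [Finset.sum_congr rfl h2, Finset.sum_comm]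
  refine Finset.sum_congr rfl fun a _ => ?_
  rw [Finset.sum_ite_eq, if_pos]
  exact Finset.mem_image_of_mem _ (Finset.mem_univ a)

/-- The matrix expressing the `m_μ` through the `e_ν` is symmetric: expanding each `m_μ` in the
`e_ν`, the symmetry of the Cauchy kernel becomes that of the matrix, because the products
`e_ν(x) e_μ(y)` are linearly independent. -/
theorem coeff_symm {n : ℕ} {μ ν : Multiset ℕ} (hμ : μ ∈ boxPartitions n)
    (hν : ν ∈ boxPartitions n) {f g : MvPolynomial (Fin n) ℤ}
    (hf : esymmHom n ℤ f = msymmM n ℤ μ) (hg : esymmHom n ℤ g = msymmM n ℤ ν) :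
    coeff (expOf n ν) f = coeff (expOf n μ) g := by
  choose ψ hψ using fun μ => exists_esymmHom_eq (msymmM_isSymmetric n μ)
  obtain rfl : f = ψ μ := esymmHom_injective n ℤ (by rw [hf, hψ])
  obtain rfl : g = ψ ν := esymmHom_injective n ℤ (by rw [hg, hψ])
  have hK := comm_cauchyKernel n
  rw [cauchyKernel_eq, map_sum] at hK
  simp_rw [TensorProduct.comm_tmul, ← hψ] at hK
  have hinj := TensorProduct.map_injective_of_flat_flat (esymmHom n ℤ).toLinearMap
    (esymmHom n ℤ).toLinearMap (esymmHom_injective n ℤ) (esymmHom_injective n ℤ)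
  have hK' : ∑ κ ∈ boxPartitions n, monomial (expOf n κ) (1 : ℤ) ⊗ₜ[ℤ] ψ κ =
      ∑ κ ∈ boxPartitions n, ψ κ ⊗ₜ[ℤ] monomial (expOf n κ) (1 : ℤ) := by
    apply hinj
    simpa only [map_sum, TensorProduct.map_tmul, AlgHom.toLinearMap_apply] using hK
  have hc := congrArg (LinearMap.mul' ℤ ℤ ∘ₗ
    TensorProduct.map (lcoeff ℤ (expOf n ν)) (lcoeff ℤ (expOf n μ))) hK'
  have hbox : ∀ κ ∈ boxPartitions n, ∀ κ' ∈ boxPartitions n,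
      (expOf n κ = expOf n κ' ↔ κ = κ') := fun κ h κ' h' =>
    ⟨expOf_injOn (mem_boxPartitions.1 h).1 (mem_boxPartitions.1 h').1, fun h => by rw [h]⟩
  simp only [map_sum, LinearMap.comp_apply, TensorProduct.map_tmul, LinearMap.mul'_apply,
    lcoeff_apply, coeff_monomial] at hc
  have hl : ∑ κ ∈ boxPartitions n,
      (if expOf n κ = expOf n ν then (1 : ℤ) else 0) * coeff (expOf n μ) (ψ κ) =
      ∑ κ ∈ boxPartitions n, (if κ = ν then (1 : ℤ) else 0) * coeff (expOf n μ) (ψ κ) :=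
    Finset.sum_congr rfl fun κ h => by rw [if_congr (hbox κ h ν hν) rfl rfl]
  have hr : ∑ κ ∈ boxPartitions n,
      coeff (expOf n ν) (ψ κ) * (if expOf n κ = expOf n μ then (1 : ℤ) else 0) =
      ∑ κ ∈ boxPartitions n, coeff (expOf n ν) (ψ κ) * (if κ = μ then (1 : ℤ) else 0) :=
    Finset.sum_congr rfl fun κ h => by rw [if_congr (hbox κ h μ hμ) rfl rfl]
  rw [hl, hr] at hc
  simpa [hμ, hν] using hc.symm

/-! ### The substitution `x ↦ x^p` on symmetric polynomials -/

/-- In the coordinates `e_1, …, e_n` on symmetric polynomials, `f(x) ↦ f(x^p)` is a Frobenius lift. -/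
theorem exists_frobenius_lift (n p : ℕ) (hp : p.Prime) :
    ∃ φ : MvPolynomial (Fin n) ℤ →+* MvPolynomial (Fin n) ℤ,
      (∀ f, esymmHom n ℤ (φ f) = expand p (esymmHom n ℤ f)) ∧
      ∀ f, (p : MvPolynomial (Fin n) ℤ) ∣ φ f - f ^ p := by
  have hsymm : ∀ i : Fin n, (expand p (esymm (Fin n) ℤ ((i : ℕ) + 1))).IsSymmetric := by
    intro i e
    rw [rename_expand, esymm_isSymmetric]
  choose r hr using fun i => exists_esymmHom_eq (hsymm i)
  have key : (esymmHom n ℤ).comp (aeval r) = (expand p).comp (esymmHom n ℤ) := by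
    ext1 i
    simp only [AlgHom.comp_apply, aeval_X, hr]
    simp [esymmHom]
  have key' : ∀ f, esymmHom n ℤ (aeval r f) = expand p (esymmHom n ℤ f) :=
    fun f => DFunLike.congr_fun key f
  refine ⟨(aeval r : MvPolynomial (Fin n) ℤ →ₐ[ℤ] MvPolynomial (Fin n) ℤ).toRingHom,
    key', fun f => ?_⟩
  have := Fact.mk hp
  rw [show (p : MvPolynomial (Fin n) ℤ) = C (p : ℤ) by simp, C_dvd_iff_zmod, map_sub, map_pow,
    sub_eq_zero]
  apply esymmHom_injective n (ZMod p)
  rw [map_pow, ← map_esymmHom, ← map_esymmHom]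
  change MvPolynomial.map _ (esymmHom n ℤ (aeval r f)) = _
  rw [key', map_expand, expand_zmod]

theorem dvd_expand_sub_pow {n p : ℕ} (hp : p.Prime) (f : MvPolynomial (Fin n) ℤ) :
    (p : MvPolynomial (Fin n) ℤ) ∣ expand p f - f ^ p := by
  have := Fact.mk hp
  rw [show (p : MvPolynomial (Fin n) ℤ) = C (p : ℤ) by simp, C_dvd_iff_zmod, map_sub, map_pow,
    sub_eq_zero, map_expand, expand_zmod]

/-- Iterates of a Frobenius lift `φ`, compared coefficientwise by means of the Frobenius lift
`X_i ↦ X_i^p`, which moves the coefficient at `c` to `p • c`. -/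
theorem coeff_iterate_modEq {n p : ℕ} (hp : p.Prime)
    {φ : MvPolynomial (Fin n) ℤ →+* MvPolynomial (Fin n) ℤ}
    (hφ : ∀ f, (p : MvPolynomial (Fin n) ℤ) ∣ φ f - f ^ p) (g : MvPolynomial (Fin n) ℤ)
    (t j : ℕ) (c : Fin n →₀ ℕ) :
    coeff (p ^ j • c) (φ^[t + j] g) ≡ coeff c (φ^[t] g) [ZMOD (p : ℤ) ^ (t + 1)] := by
  induction j with
  | zero => simp [Int.ModEq.refl]
  | succ j ih =>
    refine Int.ModEq.trans ?_ ih
    have h := frobenius_lift_iterate φ (expand p).toRingHom hφ (dvd_expand_sub_pow hp) (t + j) g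
    rw [show (p : MvPolynomial (Fin n) ℤ) ^ (t + j + 1) = C ((p : ℤ) ^ (t + j + 1)) by simp,
      C_dvd_iff_dvd_coeff] at h
    have h' := h (p ^ (j + 1) • c)
    rw [coeff_sub, pow_succ' p j, mul_smul] at h'
    change _ ∣ _ - coeff _ (expand p _) at h'
    rw [coeff_expand_smul _ hp.ne_zero] at h'
    rw [pow_succ' p j, mul_smul]
    exact (Int.modEq_iff_dvd.2 ((pow_dvd_pow _ (by omega)).trans h')).symm

theorem expOf_nsmul (n k : ℕ) (μ : Multiset ℕ) : expOf n (k • μ) = k • expOf n μ := by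
  ext i
  simp [expOf]

end

theorem stmt9 (p : ℕ) (hp : p.Prime) (w' j t : ℕ) (hw' : 1 ≤ w') (hj : 1 ≤ j)
    -- `λ'`, `μ'` are partitions of `w'`, with every part of `λ'` divisible by `p^t`
    (lam' μ' : Multiset ℕ)
    (hlpos : ∀ i ∈ lam', 0 < i) (hlsum : lam'.sum = w')
    (hμpos : ∀ i ∈ μ', 0 < i) (hμsum : μ'.sum = w')
    (hdvd : ∀ i ∈ lam', p ^ t ∣ i)
    (n : ℕ) (hn : w' * p ^ j ≤ n)
    (hlamle : ∀ i ∈ lam', p ^ j * i ≤ n)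
    -- `ψ` is the unique polynomial with `m_{p^j·λ... μ} = ψ(e_1,…,e_n)` for `μ = p^j * μ'`,
    -- and `ψ'` the one for `μ'`
    (ψ ψ' : MvPolynomial (Fin n) ℤ)
    (hψ : MvPolynomial.aeval (fun i : Fin n => MvPolynomial.esymm (Fin n) ℤ ((i : ℕ) + 1)) ψ =
      msymmM n ℤ (p ^ j • μ'))
    (hψ' : MvPolynomial.aeval (fun i : Fin n => MvPolynomial.esymm (Fin n) ℤ ((i : ℕ) + 1)) ψ' =
      msymmM n ℤ μ') :
    -- `d_{λμ} ≡ d_{λ'μ'} (mod p^(t+1))` where `λ = p^j·λ'` and `μ = p^j * μ'`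
    ψ.coeff (expOf n (lam'.map fun i => p ^ j * i)) ≡
      ψ'.coeff (expOf n lam') [ZMOD ((p : ℤ) ^ (t + 1))] := by
  have hj1 : 1 ≤ p ^ j := Nat.one_le_pow _ _ hp.pos
  have hwn : w' ≤ n := (Nat.le_mul_of_pos_right _ hj1).trans hn
  have hcard : ∀ {κ : Multiset ℕ}, (∀ i ∈ κ, 0 < i) → Multiset.card κ ≤ κ.sum := fun {κ} h => by
    simpa using Multiset.card_nsmul_le_sum (s := κ) (a := 1) h
  have hbox : ∀ {κ : Multiset ℕ}, (∀ i ∈ κ, 0 < i) → κ.sum ≤ n → κ ∈ boxPartitions n :=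
    fun h hs => mem_boxPartitions.2
      ⟨fun i hi => ⟨h i hi, (Multiset.le_sum_of_mem hi).trans hs⟩, (hcard h).trans hs⟩
  have hμ' : μ' ∈ boxPartitions n := hbox hμpos (hμsum ▸ hwn)
  have hl' : lam' ∈ boxPartitions n := hbox hlpos (hlsum ▸ hwn)
  have hμ : p ^ j • μ' ∈ boxPartitions n := by
    refine hbox (fun i hi => hμpos i (Multiset.mem_of_mem_nsmul hi)) ?_
    rw [Multiset.sum_nsmul, hμsum, smul_eq_mul, mul_comm]
    exact hn
  have hl : (lam'.map fun i => p ^ j * i) ∈ boxPartitions n := by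
    refine hbox (fun i hi => ?_) ?_
    · obtain ⟨k, hk, rfl⟩ := Multiset.mem_map.1 hi
      exact Nat.mul_pos hj1 (hlpos k hk)
    · rw [Multiset.sum_map_mul_left, Multiset.map_id', hlsum, mul_comm]
      exact hn
  obtain ⟨φ, hφE, hφ⟩ := exists_frobenius_lift n p hp
  obtain ⟨κ, hκ⟩ : ∃ κ : Multiset ℕ, lam' = κ.map (p ^ t * ·) := by
    refine ⟨lam'.map (· / p ^ t), ?_⟩
    rw [Multiset.map_map]
    conv_lhs => rw [← Multiset.map_id lam']
    exact Multiset.map_congr rfl fun i hi => (Nat.mul_div_cancel' (hdvd i hi)).symm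
  obtain ⟨g, hg⟩ := exists_esymmHom_eq (msymmM_isSymmetric n κ)
  have hiter : ∀ s, esymmHom n ℤ (φ^[s] g) = msymmM n ℤ (κ.map (p ^ s * ·)) := by
    intro s
    induction s with
    | zero => simp [hg]
    | succ s ih =>
      rw [Function.iterate_succ_apply', hφE, ih, expand_msymmM hp.ne_zero, Multiset.map_map]
      congr 2
      ext i
      simp only [Function.comp_apply]
      ring
  -- Transpose both coefficients: `φ^(t+j) g` and `φ^t g` express `m_λ` and `m_λ'`.
  have h1 := coeff_symm hμ hl hψ (g := φ^[t + j] g) (by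
    rw [hiter, hκ, Multiset.map_map]
    congr 2
    ext i
    simp only [Function.comp_apply]
    ring)
  have h2 := coeff_symm hμ' hl' hψ' (g := φ^[t] g) (by rw [hiter, hκ])
  rw [h1, h2, expOf_nsmul]
  exact coeff_iterate_modEq hp hφ g t j _
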